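/- arXiv:0711.2507 — 6 statements merged into one kernel-verified Lean document; each statement's English description precedes it below -/
import Mathlib

section
/- Let β ∈ (1/2,1), let φ : [0,∞) → ℝ be a function with φ(0) = 0 which is β-Hölder continuous on [0,T] for every T > 0, and let x₀ > 0. Suppose f satisfies assumptions (i) and (ii). Then there exists a unique continuous function x : [0,∞) → ℝ with x_t > 0 for all t ≥ 0 satisfying the integral equation x_t = x₀ + ∫₀ᵗ f(s, x_s) ds + φ(t) for all t ≥ 0. -/
open Set MeasureTheory

/-! Since `f t` is nonincreasing, two solutions cannot separate (`solution_le`), which gives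
uniqueness on every interval `[0,T]` and lets the solutions on these intervals be glued together.

For existence on `[0,T]`, the singularity is removed by replacing the drift `f s x` by
`f s (max ε x)`. This field is bounded by `sup f(·,ε)` and locally Lipschitz in space, so
Picard-Lindelöf applied to `y - φ` gives a solution on the whole interval
(`exists_truncated_solution`). It remains to choose `ε` such that this solution never
reaches `ε`. If it did, consider its last descent from `2ε`, of duration `h`: the drift there is at
least `c (2ε)^(-α)`, while `φ` contributes at least `-C h^β`, so
`C h^β ≥ ε + c (2ε)^(-α) h`. The first term forces `h` to be at least of order `ε^(1/β)`, the
second forces `h` to be at most of order `ε^(α/(1-β))`. As `α > 1/β - 1` these are incompatible for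
small `ε` (`exists_barrier`). -/

/-- The last time `σ` before `t` at which `h` is nonnegative. It serves both the comparison of two
solutions and the lower barrier. -/
lemma exists_last_nonneg {h : ℝ → ℝ} {t : ℝ} (ht : 0 ≤ t) (hc : ContinuousOn h (Icc 0 t))
    (h0 : 0 ≤ h 0) (hlt : h t < 0) :
    ∃ σ, 0 ≤ σ ∧ σ < t ∧ 0 ≤ h σ ∧ ∀ s ∈ Ioc σ t, h s < 0 := by
  have hcl : IsClosed (Icc 0 t ∩ h ⁻¹' Ici 0) := hc.preimage_isClosed_of_isClosed isClosed_Icc isClosed_Ici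
  have hcomp : IsCompact (Icc 0 t ∩ h ⁻¹' Ici 0) :=
    isCompact_Icc.of_isClosed_subset hcl inter_subset_left
  obtain ⟨σ, ⟨⟨hσ0, hσt⟩, hσ⟩, hub⟩ := hcomp.exists_isGreatest ⟨0, ⟨le_rfl, ht⟩, h0⟩
  refine ⟨σ, hσ0, lt_of_le_of_ne hσt ?_, hσ, fun s hs => ?_⟩
  · rintro rfl
    exact absurd hlt (not_lt.mpr hσ)
  · by_contra hcon
    exact absurd (hub ⟨⟨hσ0.trans hs.1.le, hs.2⟩, not_lt.mp hcon⟩) (not_le.mpr hs.1)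

/-- The barrier level: this is where `α > 1/β - 1` enters. The inequality says that over a time `h`
a `β`-Hölder path cannot descend by `ε` against a drift of at least `c (2ε)^(-α)`, however long
the descent takes. -/
lemma exists_barrier {β α C c d : ℝ} (hβ0 : 0 < β) (hα : 1 / β - 1 < α)
    (hβ1 : β < 1) (hC : 0 < C) (hc : 0 < c) (hd : 0 < d) :
    ∃ ε, 0 < ε ∧ ε < d ∧ ∀ h > 0, C * h ^ β < ε + c * (2 * ε) ^ (-α) * h := by
  -- Set `ε = 2 * C * η^β`. For `h ≤ η` the term `ε` alone dominates `C h^β`. For `h > η` one has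
  -- `C h^β ≤ C η^(β-1) h`, and the drift dominates it as soon as `η^(αβ+β-1)` is small.
  have hp : 0 < α * β + (β - 1) := by
    have := mul_lt_mul_of_pos_right hα hβ0
    rw [sub_mul, one_div, inv_mul_cancel₀ hβ0.ne'] at this
    linarith
  have hzero : ∀ p : ℝ, 0 < p → Filter.Tendsto (fun x : ℝ => x ^ p) (nhdsWithin 0 (Ioi 0)) (nhds 0) := by
    intro p hp
    have := (Real.continuousAt_rpow_const 0 p (Or.inr hp.le)).tendsto
    rw [Real.zero_rpow hp.ne'] at this
    exact this.mono_left nhdsWithin_le_nhds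
  have hK : 0 < c * (4 * C) ^ (-α) / C := by positivity
  obtain ⟨η, h1, h2, hη⟩ := ((hzero β hβ0).eventually_lt_const (u := d / (2 * C)) (by positivity) |>.and
    (((hzero _ hp).eventually_lt_const hK).and self_mem_nhdsWithin)).exists
  have hη : 0 < η := hη
  refine ⟨2 * C * η ^ β, by positivity, ?_, fun h hh => ?_⟩
  · rw [lt_div_iff₀ (by positivity)] at h1
    linarith
  rcases le_or_gt h η with hle | hgt
  · have : h ^ β ≤ η ^ β := Real.rpow_le_rpow hh.le hle hβ0.le
    have h3 : 0 < C * η ^ β := by positivity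
    have h4 : 0 ≤ c * (2 * (2 * C * η ^ β)) ^ (-α) * h := by positivity
    nlinarith
  · have e1 : h ^ β = h ^ (β - 1) * h := by
      rw [← Real.rpow_add_one hh.ne']; ring_nf
    have e2 : h ^ (β - 1) ≤ η ^ (β - 1) :=
      Real.rpow_le_rpow_of_nonpos hη hgt.le (by linarith)
    have e3 : (2 * (2 * C * η ^ β)) ^ (-α) = (4 * C) ^ (-α) * (η ^ (α * β))⁻¹ := by
      rw [show 2 * (2 * C * η ^ β) = (4 * C) * η ^ β by ring,
        Real.mul_rpow (by positivity) (by positivity), ← Real.rpow_mul hη.le,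
        ← Real.rpow_neg hη.le]
      ring_nf
    have e4 : C * η ^ (β - 1) ≤ c * ((4 * C) ^ (-α) * (η ^ (α * β))⁻¹) := by
      rw [Real.rpow_add hη, lt_div_iff₀ hC] at h2
      rw [← mul_assoc, ← div_eq_mul_inv, le_div_iff₀ (by positivity)]
      linarith
    rw [e3, e1, ← mul_assoc]
    have h5 : C * h ^ (β - 1) * h ≤ c * ((4 * C) ^ (-α) * (η ^ (α * β))⁻¹) * h :=
      mul_le_mul_of_nonneg_right ((mul_le_mul_of_nonneg_left e2 hC.le).trans e4) hh.le
    have : 0 < 2 * C * η ^ β := by positivity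
    linarith

lemma antitoneOn_section {f f' : ℝ → ℝ → ℝ}
    (hf_cont : ContinuousOn (fun p : ℝ × ℝ => f p.1 p.2) (Ici 0 ×ˢ Ioi 0))
    (hderiv : ∀ t ≥ (0:ℝ), ∀ x > (0:ℝ), HasDerivAt (fun y => f t y) (f' t x) x)
    (hf'_nonpos : ∀ t > (0:ℝ), ∀ x > (0:ℝ), f' t x ≤ 0) {t : ℝ} (ht : 0 ≤ t) :
    AntitoneOn (f t) (Ioi 0) := by
  have hpos : ∀ t > (0:ℝ), AntitoneOn (f t) (Ioi 0) := by
    intro t ht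
    refine antitoneOn_of_deriv_nonpos (convex_Ioi 0)
      (fun x hx => (hderiv t ht.le x hx).continuousAt.continuousWithinAt) ?_ ?_
    · rw [interior_Ioi]
      exact fun x hx => (hderiv t ht.le x hx).differentiableAt.differentiableWithinAt
    · rw [interior_Ioi]
      intro x hx
      rw [(hderiv t ht.le x hx).deriv]
      exact hf'_nonpos t ht x hx
  -- At `t = 0` no sign of `f'` is assumed: the inequality passes to the limit `t → 0+`.
  rcases ht.eq_or_lt with rfl | ht
  · intro a ha b hb hab
    have lim : ∀ x ∈ Ioi (0:ℝ), Filter.Tendsto (fun s => f s x) (nhdsWithin 0 (Ioi 0)) (nhds (f 0 x)) := by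
      intro x hx
      have h1 : ContinuousOn (fun s : ℝ => f s x) (Ici 0) :=
        hf_cont.comp (f := fun s : ℝ => (s, x)) (by fun_prop) (fun s hs => ⟨hs, hx⟩)
      exact (h1 0 self_mem_Ici).tendsto.mono_left (nhdsWithin_mono _ Ioi_subset_Ici_self)
    exact le_of_tendsto_of_tendsto (lim b hb) (lim a ha)
      (Filter.eventually_of_mem self_mem_nhdsWithin fun s hs => hpos s hs ha hb hab)
  · exact hpos t ht

/-- One-sided uniqueness on `[0,T]`: after the last time when `x ≤ y`, the path `y` lies below
`x`, so by monotonicity its drift is at least that of `x` and `y - x` cannot decrease. -/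
lemma solution_le {f : ℝ → ℝ → ℝ} {φ x y : ℝ → ℝ} {x₀ T : ℝ}
    (hf_cont : ContinuousOn (fun p : ℝ × ℝ => f p.1 p.2) (Ici 0 ×ˢ Ioi 0))
    (hanti : ∀ t ≥ (0:ℝ), AntitoneOn (f t) (Ioi 0))
    (hxc : ContinuousOn x (Icc 0 T)) (hxp : ∀ t ∈ Icc 0 T, 0 < x t)
    (hx : ∀ t ∈ Icc 0 T, x t = x₀ + (∫ s in (0:ℝ)..t, f s (x s)) + φ t)
    (hyc : ContinuousOn y (Icc 0 T)) (hyp : ∀ t ∈ Icc 0 T, 0 < y t)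
    (hy : ∀ t ∈ Icc 0 T, y t = x₀ + (∫ s in (0:ℝ)..t, f s (y s)) + φ t)
    {t : ℝ} (ht : t ∈ Icc 0 T) : x t ≤ y t := by
  by_contra hcon
  have hsub : Icc 0 t ⊆ Icc 0 T := Icc_subset_Icc_right ht.2
  have h0 : (0:ℝ) ∈ Icc 0 T := ⟨le_rfl, ht.1.trans ht.2⟩
  have comp : ∀ z : ℝ → ℝ, ContinuousOn z (Icc 0 T) → (∀ t ∈ Icc 0 T, 0 < z t) →
      ∀ a ∈ Icc 0 T, ∀ b ∈ Icc 0 T, IntervalIntegrable (fun s => f s (z s)) volume a b := by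
    intro z hz hzp a ha b hb
    refine ContinuousOn.intervalIntegrable (ContinuousOn.mono ?_ (uIcc_subset_Icc ha hb))
    exact hf_cont.comp (f := fun s : ℝ => (s, z s)) (by fun_prop) (fun s hs => ⟨hs.1, hzp s hs⟩)
  obtain ⟨σ, hσ0, hσt, hσ, hlast⟩ := exists_last_nonneg (h := fun s => y s - x s) ht.1
    ((hyc.sub hxc).mono hsub) (by simp [hx 0 h0, hy 0 h0]) (by simpa using hcon)
  have hσT : σ ∈ Icc 0 T := ⟨hσ0, hσt.le.trans ht.2⟩
  have hmono : (∫ s in σ..t, f s (x s)) ≤ ∫ s in σ..t, f s (y s) := by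
    refine intervalIntegral.integral_mono_on_of_le_Ioo hσt.le (comp x hxc hxp σ hσT t ht)
      (comp y hyc hyp σ hσT t ht) fun s hs => ?_
    have hsT : s ∈ Icc 0 T := ⟨hσ0.trans hs.1.le, hs.2.le.trans ht.2⟩
    exact hanti s hsT.1 (hyp s hsT) (hxp s hsT) (by linarith [hlast s ⟨hs.1, hs.2.le⟩])
  have ex := intervalIntegral.integral_interval_sub_left
    (comp x hxc hxp 0 h0 t ht) (comp x hxc hxp 0 h0 σ hσT)
  have ey := intervalIntegral.integral_interval_sub_left
    (comp y hyc hyp 0 h0 t ht) (comp y hyc hyp 0 h0 σ hσT)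
  have := hx t ht
  have := hy t ht
  have := hx σ hσT
  have := hy σ hσT
  linarith

/-- The equation with drift `f s (max ε ·)`, which is no longer singular, is solvable on all of
`[0,T]`. -/
lemma exists_truncated_solution {f f' : ℝ → ℝ → ℝ} {φ : ℝ → ℝ} {x₀ T ε : ℝ}
    (hf_nonneg : ∀ t ≥ (0:ℝ), ∀ x > (0:ℝ), 0 ≤ f t x)
    (hf_cont : ContinuousOn (fun p : ℝ × ℝ => f p.1 p.2) (Ici 0 ×ˢ Ioi 0))
    (hderiv : ∀ t ≥ (0:ℝ), ∀ x > (0:ℝ), HasDerivAt (fun y => f t y) (f' t x) x)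
    (hf'_cont : ContinuousOn (fun p : ℝ × ℝ => f' p.1 p.2) (Ici 0 ×ˢ Ioi 0))
    (hanti : ∀ t ≥ (0:ℝ), AntitoneOn (f t) (Ioi 0))
    (hφ : ContinuousOn φ (Icc 0 T)) (hT : 0 < T) (hε : 0 < ε) :
    ∃ y : ℝ → ℝ, ContinuousOn y (Icc 0 T) ∧
      ∀ t ∈ Icc 0 T, y t = x₀ + (∫ s in (0:ℝ)..t, f s (max ε (y s))) + φ t := by
  have hmax : ∀ w, ε ≤ max ε w := fun w => le_max_left _ _
  have hmaxpos : ∀ w, 0 < max ε w := fun w => hε.trans_le (hmax w)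
  obtain ⟨B, hB⟩ := (isCompact_Icc (a := (0:ℝ)) (b := T)).bddAbove_image
    (f := fun s => f s ε)
    (hf_cont.comp (f := fun s : ℝ => (s, ε)) (by fun_prop) (fun s hs => ⟨hs.1, hε⟩))
  have hB : ∀ s ∈ Icc 0 T, f s ε ≤ B := fun s hs => hB (mem_image_of_mem _ hs)
  have hB0 : 0 ≤ B := (hf_nonneg 0 le_rfl ε hε).trans (hB 0 ⟨le_rfl, hT.le⟩)
  obtain ⟨P, hP⟩ := (isCompact_Icc (a := (0:ℝ)) (b := T)).bddAbove_image hφ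
  have hP : ∀ s ∈ Icc 0 T, φ s ≤ P := fun s hs => hP (mem_image_of_mem _ hs)
  -- Picard-Lindelöf is applied to `z = y - φ`. The truncated drift is bounded by `B`, so `z` stays
  -- within `B * T` of `x₀`, and `M` bounds the argument of `f` there.
  set M := max ε (x₀ + B * T + P) with hM
  obtain ⟨K, hK⟩ := ((isCompact_Icc (a := (0:ℝ)) (b := T)).prod
    (isCompact_Icc (a := ε) (b := M))).exists_bound_of_continuousOn
    (hf'_cont.mono (prod_mono (fun s hs => hs.1) (fun s hs => hε.trans_le hs.1)))
  have hK : ∀ s ∈ Icc 0 T, ∀ w ∈ Icc ε M, ‖f' s w‖ ≤ K := fun s hs w hw => hK (s, w) ⟨hs, hw⟩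
  have hK0 : 0 ≤ K := (norm_nonneg _).trans (hK 0 ⟨le_rfl, hT.le⟩ ε ⟨le_rfl, hmax _⟩)
  have hcomp : ∀ z : ℝ → ℝ, ContinuousOn z (Icc 0 T) →
      ContinuousOn (fun s => f s (max ε (z s + φ s))) (Icc 0 T) := by
    intro z hz
    refine hf_cont.comp (f := fun s : ℝ => (s, max ε (z s + φ s))) ?_
      (fun s hs => ⟨hs.1, hmaxpos _⟩)
    exact continuousOn_id.prodMk ((continuous_const.max continuous_id).comp_continuousOn (hz.add hφ))
  have hPL : IsPicardLindelof (fun t z => f t (max ε (z + φ t)))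
      (⟨0, le_rfl, hT.le⟩ : Icc (0:ℝ) T) x₀ (⟨B * T, by positivity⟩ : NNReal) 0 ⟨B, hB0⟩ ⟨K, hK0⟩ := by
    refine ⟨fun t ht => ?_, fun z _ => hcomp _ continuousOn_const, fun t ht z _ => ?_, ?_⟩
    · refine LipschitzOnWith.of_dist_le_mul fun z hz w hw => ?_
      have hmem : ∀ z ∈ Metric.closedBall x₀ (B * T), max ε (z + φ t) ∈ Icc ε M := by
        intro z hz
        rw [Metric.mem_closedBall, Real.dist_eq, abs_le] at hz
        exact ⟨hmax _, max_le_max le_rfl (by linarith [hP t ht])⟩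
      have h1 := (convex_Icc ε M).norm_image_sub_le_of_norm_hasDerivWithin_le
        (fun x hx => (hderiv t ht.1 x (hε.trans_le hx.1)).hasDerivWithinAt)
        (fun x hx => hK t ht x hx) (hmem w hw) (hmem z hz)
      rw [Real.dist_eq, Real.dist_eq]
      refine h1.trans (mul_le_mul_of_nonneg_left ?_ hK0)
      have := abs_max_sub_max_le_abs (z + φ t) (w + φ t) ε
      rw [max_comm ε, max_comm ε]
      simpa using this
    · rw [Real.norm_of_nonneg (hf_nonneg t ht.1 _ (hmaxpos _))]
      exact (hanti t ht.1 hε (hmaxpos _) (hmax _)).trans (hB t ht)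
    · simp only [sub_zero, NNReal.coe_zero, max_eq_left hT.le]
      exact le_rfl
  obtain ⟨z, hz0, hz⟩ := hPL.exists_eq_forall_mem_Icc_hasDerivWithinAt₀
  have hz0 : z 0 = x₀ := hz0
  have hzc : ContinuousOn z (Icc 0 T) := fun t ht => (hz t ht).continuousWithinAt
  refine ⟨fun t => z t + φ t, hzc.add hφ, fun t ht => ?_⟩
  have hsub : Icc 0 t ⊆ Icc 0 T := Icc_subset_Icc_right ht.2
  rw [intervalIntegral.integral_eq_sub_of_hasDerivAt_of_le ht.1 (hzc.mono hsub)
    (fun s hs => (hz s ⟨hs.1.le, hs.2.le.trans ht.2⟩).hasDerivAt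
      (Icc_mem_nhds hs.1 (hs.2.trans_le ht.2)))
    (((hcomp z hzc).mono hsub).intervalIntegrable_of_Icc ht.1), hz0]
  ring

lemma continuousOn_of_holder {φ : ℝ → ℝ} {β C : ℝ} {S : Set ℝ} (hβ : 0 < β)
    (h : ∀ u ∈ S, ∀ v ∈ S, |φ u - φ v| ≤ C * |u - v| ^ β) : ContinuousOn φ S := by
  intro v hv
  rw [ContinuousWithinAt, tendsto_iff_norm_sub_tendsto_zero]
  refine squeeze_zero' (Filter.Eventually.of_forall fun _ => norm_nonneg _)
    (g := fun u => C * |u - v| ^ β)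
    (Filter.eventually_of_mem self_mem_nhdsWithin fun u hu => h u hu v hv) ?_
  have : Continuous fun u => C * |u - v| ^ β :=
    continuous_const.mul ((continuous_id.sub continuous_const).abs.rpow_const fun _ => Or.inr hβ.le)
  have h2 := this.tendsto v
  simp only [sub_self, abs_zero, Real.zero_rpow hβ.ne', mul_zero] at h2
  exact h2.mono_left nhdsWithin_le_nhds

/-- Existence on `[0,T]`: for the right `ε` the truncated solution stays above `ε`, so the
truncation is never active. -/
lemma exists_pos_solution {β : ℝ} (hβ0 : 0 < β) (hβ1 : β < 1)
    {φ : ℝ → ℝ} (hφ0 : φ 0 = 0) {T C : ℝ} (hT : 0 < T)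
    (hφH : ∀ u ∈ Icc (0:ℝ) T, ∀ v ∈ Icc (0:ℝ) T, |φ u - φ v| ≤ C * |u - v| ^ β)
    {x₀ : ℝ} (hx₀ : 0 < x₀) {f f' : ℝ → ℝ → ℝ} {g : ℝ → ℝ} {x₁ α : ℝ}
    (hf_nonneg : ∀ t ≥ (0:ℝ), ∀ x > (0:ℝ), 0 ≤ f t x)
    (hf_cont : ContinuousOn (fun p : ℝ × ℝ => f p.1 p.2) (Ici 0 ×ˢ Ioi 0))
    (hderiv : ∀ t ≥ (0:ℝ), ∀ x > (0:ℝ), HasDerivAt (fun y => f t y) (f' t x) x)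
    (hf'_cont : ContinuousOn (fun p : ℝ × ℝ => f' p.1 p.2) (Ici 0 ×ˢ Ioi 0))
    (hanti : ∀ t ≥ (0:ℝ), AntitoneOn (f t) (Ioi 0))
    (hx₁ : 0 < x₁) (hα : 1/β - 1 < α)
    (hg_cont : ContinuousOn g (Ici 0)) (hg_pos : ∀ t > (0:ℝ), 0 < g t)
    (hlower : ∀ t ≥ (0:ℝ), ∀ x : ℝ, 0 < x → x < x₁ → g t * x ^ (-α) ≤ f t x) :
    ∃ y : ℝ → ℝ, ContinuousOn y (Icc 0 T) ∧ (∀ t ∈ Icc 0 T, 0 < y t) ∧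
      ∀ t ∈ Icc 0 T, y t = x₀ + (∫ s in (0:ℝ)..t, f s (y s)) + φ t := by
  have hα0 : 0 < α := by
    have : 1 < 1 / β := by rw [lt_div_iff₀ hβ0]; linarith
    linarith
  have hφc := continuousOn_of_holder hβ0 hφH
  have h0T : (0:ℝ) ∈ Icc 0 T := ⟨le_rfl, hT.le⟩
  -- `g 0` may vanish, so a lower bound on `g` needs times away from `0`. Up to time `δ` positivity
  -- follows from the smallness of `φ` alone.
  obtain ⟨δ, hδ, hδT, hφδ⟩ : ∃ δ, 0 < δ ∧ δ ≤ T ∧ ∀ s ∈ Icc 0 δ, -(x₀ / 2) < φ s := by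
    have h1 := (hφc 0 h0T).eventually_const_lt (u := -(x₀ / 2)) (by rw [hφ0]; linarith)
    obtain ⟨r, hr, hball⟩ := Metric.mem_nhdsWithin_iff.mp h1
    refine ⟨min (r / 2) T, by positivity, min_le_right _ _,
      fun s hs => hball ⟨?_, hs.1, hs.2.trans (min_le_right _ _)⟩⟩
    rw [Metric.mem_ball, Real.dist_eq, sub_zero, abs_of_nonneg hs.1]
    linarith [hs.2.trans (min_le_left _ _)]
  obtain ⟨m, hm, hmin⟩ := (isCompact_Icc (a := δ) (b := T)).exists_isMinOn ⟨δ, le_rfl, hδT⟩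
    (hg_cont.mono fun s hs => hδ.le.trans hs.1)
  have hc : 0 < g m := hg_pos m (hδ.trans_le hm.1)
  have hmin : ∀ s ∈ Icc δ T, g m ≤ g s := fun s hs => hmin hs
  obtain ⟨ε, hε, hεd, hbar⟩ := exists_barrier (C := max C 1) (c := g m)
    (d := min (x₀ / 4) (x₁ / 2)) hβ0 hα hβ1 (by positivity) hc (by positivity)
  have hεx₀ : 2 * ε < x₀ / 2 := by linarith [hεd.trans_le (min_le_left _ _)]
  have hεx₁ : 2 * ε < x₁ := by linarith [hεd.trans_le (min_le_right _ _)]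
  obtain ⟨y, hyc, hy⟩ := exists_truncated_solution (x₀ := x₀) hf_nonneg hf_cont hderiv hf'_cont
    hanti hφc hT hε
  have hpos : ∀ w, 0 < max ε w := fun w => hε.trans_le (le_max_left _ _)
  have hFc : ContinuousOn (fun s => f s (max ε (y s))) (Icc 0 T) :=
    hf_cont.comp (f := fun s : ℝ => (s, max ε (y s)))
      (continuousOn_id.prodMk ((continuous_const.max continuous_id).comp_continuousOn hyc)) (fun s hs => ⟨hs.1, hpos _⟩)
  have hFi : ∀ a ∈ Icc 0 T, ∀ b ∈ Icc 0 T,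
      IntervalIntegrable (fun s => f s (max ε (y s))) volume a b := fun a ha b hb =>
    (hFc.mono (uIcc_subset_Icc ha hb)).intervalIntegrable
  have hearly : ∀ s ∈ Icc 0 δ, 2 * ε < y s := by
    intro s hs
    have : 0 ≤ ∫ r in (0:ℝ)..s, f r (max ε (y r)) :=
      intervalIntegral.integral_nonneg hs.1 fun r hr => hf_nonneg r hr.1 _ (hpos _)
    linarith [hy s ⟨hs.1, hs.2.trans hδT⟩, hφδ s hs]
  -- On the last descent from `2ε` to below `ε` the drift is at least `g m * (2ε)^(-α)`,
  -- which contradicts the choice of `ε`.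
  have key : ∀ τ ∈ Icc 0 T, ε < y τ := by
    intro τ hτ
    by_contra hcon
    rw [not_lt] at hcon
    obtain ⟨σ, hσ0, hστ, hσ, hlast⟩ := exists_last_nonneg (h := fun s => y s - 2 * ε) hτ.1
      ((hyc.mono (Icc_subset_Icc_right hτ.2)).sub continuousOn_const)
      (by linarith [hearly 0 ⟨le_rfl, hδ.le⟩]) (by linarith)
    have hσT : σ ∈ Icc 0 T := ⟨hσ0, hστ.le.trans hτ.2⟩
    have hδs : ∀ s ∈ Ioc σ τ, δ < s := by
      intro s hs
      by_contra hsδ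
      linarith [hlast s hs, hearly s ⟨hσ0.trans hs.1.le, not_lt.mp hsδ⟩]
    have hdrift : (∫ _ in σ..τ, g m * (2 * ε) ^ (-α)) ≤ ∫ s in σ..τ, f s (max ε (y s)) := by
      refine intervalIntegral.integral_mono_on_of_le_Ioo hστ.le (by simp) (hFi σ hσT τ hτ)
        fun s hs => ?_
      have hs' : s ∈ Ioc σ τ := ⟨hs.1, hs.2.le⟩
      have hδ' := hδs s hs'
      have hle : max ε (y s) ≤ 2 * ε := max_le (by linarith) (by linarith [hlast s hs'])
      refine le_trans ?_ (hlower s (hδ.trans hδ').le _ (hpos _) (hle.trans_lt hεx₁))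
      exact mul_le_mul (hmin s ⟨hδ'.le, hs.2.le.trans hτ.2⟩)
        (Real.rpow_le_rpow_of_nonpos (hpos _) hle (by linarith)) (by positivity)
        (hg_pos s (hδ.trans hδ')).le
    rw [intervalIntegral.integral_const, smul_eq_mul] at hdrift
    have hsplit := intervalIntegral.integral_interval_sub_left
      (hFi 0 h0T τ hτ) (hFi 0 h0T σ hσT)
    have hH := (abs_le.mp (hφH τ hτ σ hσT)).1
    rw [abs_of_pos (sub_pos.mpr hστ)] at hH
    have hC : C * (τ - σ) ^ β ≤ max C 1 * (τ - σ) ^ β :=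
      mul_le_mul_of_nonneg_right (le_max_left _ _) (Real.rpow_nonneg (sub_pos.mpr hστ).le _)
    have := hbar (τ - σ) (sub_pos.mpr hστ)
    linarith [hy τ hτ, hy σ hσT]
  refine ⟨y, hyc, fun t ht => hε.trans (key t ht), fun t ht => ?_⟩
  rw [hy t ht]
  congr 2
  refine intervalIntegral.integral_congr fun s hs => ?_
  rw [uIcc_of_le ht.1] at hs
  simp only [max_eq_right (key s ⟨hs.1, hs.2.trans ht.2⟩).le]

/-- Let `β ∈ (1/2,1)`, let `φ : [0,∞) → ℝ` be a function with `φ 0 = 0`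
which is `β`-Hölder continuous on `[0,T]` for every `T > 0`, and let `x₀ > 0`.
Suppose `f` satisfies assumptions (i) and (ii) (with partial derivative `f'` in the space
variable, and with `x₁`, `α`, `g` as in assumption (ii)).  Then there exists a unique
continuous function `x` on `[0,∞)`, strictly positive, satisfying
`x t = x₀ + ∫₀ᵗ f(s, x s) ds + φ t` for all `t ≥ 0`. -/
theorem singular_ode_existence_uniqueness
    (β : ℝ) (hβ : β ∈ Set.Ioo (1/2 : ℝ) 1)
    (φ : ℝ → ℝ) (hφ0 : φ 0 = 0)
    (hφH : ∀ T > (0:ℝ), ∃ C : ℝ, ∀ u ∈ Set.Icc (0:ℝ) T, ∀ v ∈ Set.Icc (0:ℝ) T,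
      |φ u - φ v| ≤ C * |u - v| ^ β)
    (x₀ : ℝ) (hx₀ : 0 < x₀)
    (f f' : ℝ → ℝ → ℝ) (g : ℝ → ℝ) (x₁ α : ℝ)
    -- assumption (i)
    (hf_nonneg : ∀ t ≥ (0:ℝ), ∀ x > (0:ℝ), 0 ≤ f t x)
    (hf_cont : ContinuousOn (fun p : ℝ × ℝ => f p.1 p.2) (Set.Ici 0 ×ˢ Set.Ioi 0))
    (hderiv : ∀ t ≥ (0:ℝ), ∀ x > (0:ℝ), HasDerivAt (fun y => f t y) (f' t x) x)
    (hf'_cont : ContinuousOn (fun p : ℝ × ℝ => f' p.1 p.2) (Set.Ici 0 ×ˢ Set.Ioi 0))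
    (hf'_nonpos : ∀ t > (0:ℝ), ∀ x > (0:ℝ), f' t x ≤ 0)
    -- assumption (ii)
    (hx₁ : 0 < x₁) (hα : 1/β - 1 < α)
    (hg_nonneg : ∀ t ≥ (0:ℝ), 0 ≤ g t)
    (hg_cont : ContinuousOn g (Set.Ici 0))
    (hg_pos : ∀ t > (0:ℝ), 0 < g t)
    (hlower : ∀ t ≥ (0:ℝ), ∀ x : ℝ, 0 < x → x < x₁ → g t * x ^ (-α) ≤ f t x) :
    ∃ x : ℝ → ℝ,
      (ContinuousOn x (Set.Ici 0) ∧ (∀ t ≥ (0:ℝ), 0 < x t) ∧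
        (∀ t ≥ (0:ℝ), x t = x₀ + (∫ s in (0:ℝ)..t, f s (x s)) + φ t)) ∧
      (∀ y : ℝ → ℝ,
        (ContinuousOn y (Set.Ici 0) ∧ (∀ t ≥ (0:ℝ), 0 < y t) ∧
          (∀ t ≥ (0:ℝ), y t = x₀ + (∫ s in (0:ℝ)..t, f s (y s)) + φ t)) →
        ∀ t ≥ (0:ℝ), y t = x t) := by
  have hβ0 : 0 < β := by linarith [hβ.1]
  have hanti : ∀ t ≥ (0:ℝ), AntitoneOn (f t) (Ioi 0) := fun t ht =>
    antitoneOn_section hf_cont hderiv hf'_nonpos ht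
  have hex : ∀ T : ℝ, 0 < T → ∃ y : ℝ → ℝ, ContinuousOn y (Icc 0 T) ∧ (∀ t ∈ Icc 0 T, 0 < y t) ∧
      ∀ t ∈ Icc 0 T, y t = x₀ + (∫ s in (0:ℝ)..t, f s (y s)) + φ t := by
    intro T hT
    obtain ⟨C, hC⟩ := hφH T hT
    exact exists_pos_solution hβ0 hβ.2 hφ0 hT hC hx₀ hf_nonneg hf_cont hderiv hf'_cont hanti
      hx₁ hα hg_cont hg_pos hlower
  choose! X hXc hXp hX using hex
  have huniq : ∀ (T : ℝ) (x y : ℝ → ℝ),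
      ContinuousOn x (Icc 0 T) → (∀ t ∈ Icc 0 T, 0 < x t) →
      (∀ t ∈ Icc 0 T, x t = x₀ + (∫ s in (0:ℝ)..t, f s (x s)) + φ t) →
      ContinuousOn y (Icc 0 T) → (∀ t ∈ Icc 0 T, 0 < y t) →
      (∀ t ∈ Icc 0 T, y t = x₀ + (∫ s in (0:ℝ)..t, f s (y s)) + φ t) →
      ∀ t ∈ Icc 0 T, x t = y t := fun T x y hxc hxp hx hyc hyp hy t ht =>
    le_antisymm (solution_le hf_cont hanti hxc hxp hx hyc hyp hy ht)
      (solution_le hf_cont hanti hyc hyp hy hxc hxp hx ht)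
  have hcons : ∀ T, 0 < T → ∀ t ∈ Icc 0 T, X (t + 1) t = X T t := by
    intro T hT t ht
    have h1 : Icc 0 t ⊆ Icc 0 T := Icc_subset_Icc_right ht.2
    have h2 : Icc 0 t ⊆ Icc 0 (t + 1) := Icc_subset_Icc_right (by linarith)
    have h3 : 0 < t + 1 := by linarith [ht.1]
    exact huniq t _ _ ((hXc _ h3).mono h2) (fun s hs => hXp _ h3 s (h2 hs))
      (fun s hs => hX _ h3 s (h2 hs)) ((hXc _ hT).mono h1) (fun s hs => hXp _ hT s (h1 hs))
      (fun s hs => hX _ hT s (h1 hs)) t ⟨ht.1, le_rfl⟩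
  -- The global solution is glued from the solutions on `[0, t + 1]`, which agree by uniqueness.
  refine ⟨fun t => X (t + 1) t, ⟨fun t ht => ?_, fun t ht => ?_, fun t ht => ?_⟩, ?_⟩
  · have ht : 0 ≤ t := ht
    have hT : 0 < t + 1 := by linarith
    have h1 : ContinuousOn (fun t => X (t + 1) t) (Icc 0 (t + 1)) :=
      (hXc _ hT).congr (hcons _ hT)
    refine (h1 t ⟨ht, by linarith⟩).mono_of_mem_nhdsWithin ?_
    rw [← Ici_inter_Iic]
    exact inter_mem_nhdsWithin _ (Iic_mem_nhds (by linarith))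
  · have ht : 0 ≤ t := ht
    exact hXp _ (by linarith) t ⟨ht, by linarith⟩
  · have ht : 0 ≤ t := ht
    have hT : 0 < t + 1 := by linarith
    refine (hX _ hT t ⟨ht, by linarith⟩).trans ?_
    congr 2
    refine intervalIntegral.integral_congr fun s hs => ?_
    rw [uIcc_of_le ht] at hs
    simp only [hcons _ hT s ⟨hs.1, by linarith [hs.2]⟩]
  · rintro y ⟨hyc, hyp, hy⟩ t ht
    have ht : 0 ≤ t := ht
    have hT : 0 < t + 1 := by linarith
    exact huniq (t + 1) _ _ (hyc.mono fun s hs => hs.1) (fun s hs => hyp s hs.1)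
      (fun s hs => hy s hs.1) (hXc _ hT) (hXp _ hT) (hX _ hT) t ⟨ht, by linarith⟩
end

section
/- Let f : [0,∞) × (0,∞) → ℝ be a continuous function having a continuous partial derivative ∂ₓf with respect to x such that ∂ₓf(t,x) ≤ 0 for all t > 0, x > 0, let φ : [0,∞) → ℝ be continuous and x₀ > 0. If x¹ and x² are two continuous functions on [0,∞) with strictly positive values both satisfying x_t = x₀ + ∫₀ᵗ f(s, x_s) ds + φ(t) for all t ≥ 0, then x¹_t = x²_t for all t ≥ 0. -/
/-!
The perturbation `φ` cancels in the difference `d = xa - xb`, which is therefore differentiable on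
`(0, ∞)` with `d' t = f t (xa t) - f t (xb t)`. As `f t` is nonincreasing, `d * d' ≤ 0`, so `d ^ 2`
is nonincreasing on `[0, ∞)`; it vanishes at `0`, hence everywhere.
-/

open Set MeasureTheory

theorem continuousOn_comp_path {f : ℝ → ℝ → ℝ} {x : ℝ → ℝ}
    (hf : ContinuousOn (fun p : ℝ × ℝ => f p.1 p.2) (Set.Ici 0 ×ˢ Set.Ioi 0))
    (hx : ContinuousOn x (Set.Ici 0)) (hpos : ∀ t ≥ (0:ℝ), 0 < x t) :
    ContinuousOn (fun t => f t (x t)) (Set.Ici 0) :=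
  hf.comp (f := fun t => (t, x t)) (continuousOn_id.prodMk hx) fun t ht => ⟨ht, hpos t ht⟩

theorem hasDerivAt_primitive {g : ℝ → ℝ} (hg : ContinuousOn g (Set.Ici 0)) {t : ℝ} (ht : 0 < t) :
    HasDerivAt (fun u => ∫ s in (0:ℝ)..u, g s) (g t) t := by
  refine intervalIntegral.integral_hasDerivAt_right ?_ ?_
    (hg.continuousAt (Ici_mem_nhds ht))
  · refine (hg.mono fun s hs => ?_).intervalIntegrable
    rw [Set.uIcc_of_le ht.le] at hs
    exact hs.1
  · exact (hg.mono Set.Ioi_subset_Ici_self).stronglyMeasurableAtFilter isOpen_Ioi t ht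

/-- Let `f : [0,∞) × (0,∞) → ℝ` be continuous, with a continuous partial
derivative `f'` with respect to the space variable such that `f' t x ≤ 0` for all `t > 0`,
`x > 0`; let `φ : [0,∞) → ℝ` be continuous and `x₀ > 0`.  If `xa` and `xb` are two
continuous, strictly positive functions on `[0,∞)` both satisfying
`x t = x₀ + ∫₀ᵗ f(s, x s) ds + φ t` for all `t ≥ 0`, then `xa = xb` on `[0,∞)`. -/
theorem singular_ode_uniqueness
    (f f' : ℝ → ℝ → ℝ)
    (hf_cont : ContinuousOn (fun p : ℝ × ℝ => f p.1 p.2) (Set.Ici 0 ×ˢ Set.Ioi 0))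
    (hderiv : ∀ t ≥ (0:ℝ), ∀ x > (0:ℝ), HasDerivAt (fun y => f t y) (f' t x) x)
    (hf'_cont : ContinuousOn (fun p : ℝ × ℝ => f' p.1 p.2) (Set.Ici 0 ×ˢ Set.Ioi 0))
    (hf'_nonpos : ∀ t > (0:ℝ), ∀ x > (0:ℝ), f' t x ≤ 0)
    (φ : ℝ → ℝ) (hφ_cont : Continuous φ)
    (x₀ : ℝ) (hx₀ : 0 < x₀)
    (xa xb : ℝ → ℝ)
    (hxa_cont : ContinuousOn xa (Set.Ici 0)) (hxa_pos : ∀ t ≥ (0:ℝ), 0 < xa t)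
    (hxa_sol : ∀ t ≥ (0:ℝ), xa t = x₀ + (∫ s in (0:ℝ)..t, f s (xa s)) + φ t)
    (hxb_cont : ContinuousOn xb (Set.Ici 0)) (hxb_pos : ∀ t ≥ (0:ℝ), 0 < xb t)
    (hxb_sol : ∀ t ≥ (0:ℝ), xb t = x₀ + (∫ s in (0:ℝ)..t, f s (xb s)) + φ t) :
    ∀ t ≥ (0:ℝ), xa t = xb t := by
  have hanti : ∀ t > (0:ℝ), AntitoneOn (f t) (Set.Ioi 0) := fun t ht =>
    antitoneOn_of_deriv_nonpos (convex_Ioi 0)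
      (fun x hx => (hderiv t ht.le x hx).continuousAt.continuousWithinAt)
      (fun x hx => (hderiv t ht.le x (interior_subset hx)).differentiableAt.differentiableWithinAt)
      (fun x hx => by
        rw [(hderiv t ht.le x (interior_subset hx)).deriv]
        exact hf'_nonpos t ht x (interior_subset hx))
  have hd : ∀ t > (0:ℝ), HasDerivAt (fun u => xa u - xb u) (f t (xa t) - f t (xb t)) t := by
    intro t ht
    refine ((hasDerivAt_primitive (continuousOn_comp_path hf_cont hxa_cont hxa_pos) ht).sub
      (hasDerivAt_primitive (continuousOn_comp_path hf_cont hxb_cont hxb_pos) ht)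
      ).congr_of_eventuallyEq ?_
    filter_upwards [Ici_mem_nhds ht] with u hu
    rw [hxa_sol u hu, hxb_sol u hu, Pi.sub_apply]
    ring
  have hsq : AntitoneOn (fun u => (xa u - xb u) ^ 2) (Set.Ici 0) := by
    refine antitoneOn_of_deriv_nonpos (convex_Ici 0) ((hxa_cont.sub hxb_cont).pow 2) ?_ ?_ <;>
      rw [interior_Ici] <;> intro t ht
    · exact ((hd t ht).pow 2).differentiableAt.differentiableWithinAt
    · have ht' : (0:ℝ) < t := ht
      have h := ((hd t ht').pow 2).deriv
      change deriv (fun u => (xa u - xb u) ^ 2) t = _ at h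
      rw [h]
      have ha := hxa_pos t ht'.le
      have hb := hxb_pos t ht'.le
      have key : (xa t - xb t) * (f t (xa t) - f t (xb t)) ≤ 0 := by
        rcases le_total (xa t) (xb t) with hab | hab
        · exact mul_nonpos_of_nonpos_of_nonneg (sub_nonpos.2 hab)
            (sub_nonneg.2 (hanti t ht' ha hb hab))
        · exact mul_nonpos_of_nonneg_of_nonpos (sub_nonneg.2 hab)
            (sub_nonpos.2 (hanti t ht' hb ha hab))
      norm_num
      linarith
  intro t ht
  have h0 : xa 0 - xb 0 = 0 := by
    rw [hxa_sol 0 le_rfl, hxb_sol 0 le_rfl]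
    simp
  have h := hsq Set.self_mem_Ici ht ht
  simp only [h0] at h
  exact sub_eq_zero.1 (pow_eq_zero_iff two_ne_zero |>.1 (le_antisymm (by simpa using h) (sq_nonneg _)))
end

section
/- Let β ∈ (1/2,1), T > 0, let φ : [0,T] → ℝ be β-Hölder continuous with Hölder constant C (that is, |φ(t)−φ(s)| ≤ C|t−s|^β for all s,t ∈ [0,T]), let x₀ > 0 and let f : [0,∞) × (0,∞) → [0,∞) be nonnegative and continuous. Suppose x : [0,T) → (0,∞) is continuous, satisfies x_t = x₀ + ∫₀ᵗ f(s,x_s) ds + φ(t) − φ(0) for all t ∈ [0,T), and x_t → 0 as t ↑ T. Then x_t ≤ C(T−t)^β for all t ∈ [0,T), and moreover ∫ₜᵀ f(s, x_s) ds ≤ C(T−t)^β for all t ∈ [0,T). -/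
/-!
Put `g s = f s (x s) ≥ 0`, which is continuous on `[0,T)`. Subtracting the equation at `t` from the
equation at `t' ∈ [t,T)` gives `∫ₜᵗ' g = x t' - x t - (φ t' - φ t)`. As `t' ↑ T` the right side
converges, since `x t' → 0` and a Hölder function is continuous, so the integrals of the
nonnegative function `g` stay bounded and `g` is integrable up to `T`. Hence
`x t + ∫ₜᵀ g = φ t - φ T ≤ C (T - t)^β` with both terms on the left nonnegative.
-/

open Set MeasureTheory Filter

/-- Let `β ∈ (1/2,1)`, `T > 0`, let `φ : [0,T] → ℝ` be `β`-Hölder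
continuous with Hölder constant `C`, let `x₀ > 0` and let `f : [0,∞) × (0,∞) → [0,∞)` be
nonnegative and continuous.  Suppose `x : [0,T) → (0,∞)` is continuous, satisfies
`x t = x₀ + ∫₀ᵗ f(s, x s) ds + φ t − φ 0` on `[0,T)`, and `x t → 0` as `t ↑ T`.  Then
`x t ≤ C (T−t)^β` and `∫ₜᵀ f(s, x s) ds ≤ C (T−t)^β` for all `t ∈ [0,T)`. -/
theorem singular_ode_a_priori_estimate
    (β : ℝ) (hβ : β ∈ Set.Ioo (1/2 : ℝ) 1)
    (T : ℝ) (hT : 0 < T)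
    (φ : ℝ → ℝ) (C : ℝ)
    (hφH : ∀ s ∈ Set.Icc (0:ℝ) T, ∀ t ∈ Set.Icc (0:ℝ) T, |φ t - φ s| ≤ C * |t - s| ^ β)
    (x₀ : ℝ) (hx₀ : 0 < x₀)
    (f : ℝ → ℝ → ℝ)
    (hf_nonneg : ∀ t ≥ (0:ℝ), ∀ x > (0:ℝ), 0 ≤ f t x)
    (hf_cont : ContinuousOn (fun p : ℝ × ℝ => f p.1 p.2) (Set.Ici 0 ×ˢ Set.Ioi 0))
    (x : ℝ → ℝ)
    (hx_cont : ContinuousOn x (Set.Ico 0 T))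
    (hx_pos : ∀ t ∈ Set.Ico (0:ℝ) T, 0 < x t)
    (hx_sol : ∀ t ∈ Set.Ico (0:ℝ) T,
      x t = x₀ + (∫ s in (0:ℝ)..t, f s (x s)) + φ t - φ 0)
    (hx_lim : Tendsto x (nhdsWithin T (Set.Ico 0 T)) (nhds 0)) :
    ∀ t ∈ Set.Ico (0:ℝ) T,
      x t ≤ C * (T - t) ^ β ∧ (∫ s in t..T, f s (x s)) ≤ C * (T - t) ^ β := by
  have hβ0 : 0 < β := by linarith [hβ.1]
  have hTm : T ∈ Icc (0:ℝ) T := ⟨hT.le, le_rfl⟩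
  have hg_cont : ContinuousOn (fun s => f s (x s)) (Ico 0 T) :=
    hf_cont.comp (continuousOn_id.prodMk hx_cont) fun s hs => ⟨hs.1, hx_pos s hs⟩
  have hg_nonneg : ∀ s ∈ Ico (0:ℝ) T, 0 ≤ f s (x s) := fun s hs =>
    hf_nonneg s hs.1 _ (hx_pos s hs)
  have hg_int : ∀ a ∈ Ico (0:ℝ) T, ∀ b ∈ Ico (0:ℝ) T,
      IntervalIntegrable (fun s => f s (x s)) volume a b := fun a ha b hb =>
    (hg_cont.mono (ordConnected_Ico.uIcc_subset ha hb)).intervalIntegrable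
  have hφ_lim : Tendsto φ (nhdsWithin T (Ico 0 T)) (nhds (φ T)) := by
    rw [tendsto_iff_dist_tendsto_zero]
    have hlim : Tendsto (fun s => C * |s - T| ^ β) (nhdsWithin T (Ico 0 T)) (nhds 0) := by
      have hc : Continuous fun s : ℝ => C * |s - T| ^ β :=
        continuous_const.mul ((continuous_id.sub continuous_const).abs.rpow_const
          fun _ => Or.inr hβ0.le)
      simpa [Real.zero_rpow hβ0.ne'] using hc.continuousWithinAt (s := Ico 0 T) (x := T) |>.tendsto
    refine squeeze_zero' (Eventually.of_forall fun _ => dist_nonneg) ?_ hlim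
    filter_upwards [self_mem_nhdsWithin] with s hs
    exact hφH T hTm s ⟨hs.1, hs.2.le⟩
  intro t ht
  have htT : 0 < T - t := sub_pos.2 ht.2
  obtain ⟨b, -, hb_mem, hb_lim⟩ := exists_seq_strictMono_tendsto' ht.2
  have hb : ∀ n, b n ∈ Ico (0:ℝ) T := fun n => ⟨ht.1.trans (hb_mem n).1.le, (hb_mem n).2⟩
  have hb_within : Tendsto b atTop (nhdsWithin T (Ico 0 T)) :=
    tendsto_nhdsWithin_iff.2 ⟨hb_lim, Eventually.of_forall hb⟩
  have hI : ∀ n, ∫ s in t..b n, f s (x s) = x (b n) - x t - (φ (b n) - φ t) := fun n => by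
    have h0 : (0:ℝ) ∈ Ico (0:ℝ) T := ⟨le_rfl, hT⟩
    rw [← intervalIntegral.integral_interval_sub_left (hg_int 0 h0 _ (hb n)) (hg_int 0 h0 t ht)]
    linarith [hx_sol _ (hb n), hx_sol t ht]
  have hI_lim : Tendsto (fun n => ∫ s in t..b n, f s (x s)) atTop
      (nhds (0 - x t - (φ T - φ t))) := by
    simp_rw [hI]
    exact ((hx_lim.comp hb_within).sub_const _).sub ((hφ_lim.comp hb_within).sub_const _)
  -- Without integrability up to `T`, where `f` may blow up, `∫ s in t..T` would be the junk value `0`.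
  have hInt : IntegrableOn (fun s => f s (x s)) (Ioc t T) := by
    obtain ⟨M, hM⟩ := hI_lim.bddAbove_range
    refine integrableOn_Ioc_of_intervalIntegral_norm_bounded_right (I := M)
      (fun n => (hg_int t ht _ (hb n)).1) hb_lim (Eventually.of_forall fun n => ?_)
    have : ∫ s in Ioc t (b n), ‖f s (x s)‖ = ∫ s in t..b n, f s (x s) := by
      rw [intervalIntegral.integral_of_le (hb_mem n).1.le]
      refine setIntegral_congr_fun measurableSet_Ioc fun s hs => ?_
      exact Real.norm_of_nonneg (hg_nonneg s ⟨ht.1.trans hs.1.le, hs.2.trans_lt (hb n).2⟩)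
    rw [this]
    exact hM ⟨n, rfl⟩
  have hEq : ∫ s in t..T, f s (x s) = 0 - x t - (φ T - φ t) := by
    refine tendsto_nhds_unique ?_ hI_lim
    have hc := intervalIntegral.continuousOn_primitive_interval (μ := volume)
      (f := fun s => f s (x s)) (a := t) (b := T)
      (by rwa [uIcc_of_le ht.2.le, integrableOn_Icc_iff_integrableOn_Ioc])
    rw [uIcc_of_le ht.2.le] at hc
    exact (hc T ⟨ht.2.le, le_rfl⟩).tendsto.comp (tendsto_nhdsWithin_iff.2
      ⟨hb_lim, Eventually.of_forall fun n => Ioo_subset_Icc_self (hb_mem n)⟩)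
  have hI_nonneg : 0 ≤ ∫ s in t..T, f s (x s) := by
    rw [hEq]
    refine ge_of_tendsto' hI_lim fun n => ?_
    exact intervalIntegral.integral_nonneg (hb_mem n).1.le fun s hs =>
      hg_nonneg s ⟨ht.1.trans hs.1, hs.2.trans_lt (hb n).2⟩
  have hH := hφH t ⟨ht.1, ht.2.le⟩ T hTm
  rw [abs_of_pos htT] at hH
  have hφ_le := (neg_le_abs _).trans hH
  have hx := hx_pos t ht
  constructor <;> linarith
end

section
/- Let β ∈ (1/2,1), let φ : [0,∞) → ℝ satisfy φ(0) = 0 and be β-Hölder continuous on every compact interval, let x₀ > 0, and suppose f satisfies assumptions (i) and (ii). Then there is no finite T > 0 and continuous function x : [0,T) → (0,∞) satisfying x_t = x₀ + ∫₀ᵗ f(s, x_s) ds + φ(t) for all t ∈ [0,T) and x_t → 0 as t ↑ T. In other words, under (i)–(ii) a positive local solution of the singular equation never reaches zero in finite time. -/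
open Set MeasureTheory Filter

/-!
If `x` is a positive solution tending to `0` at `T`, then nonnegativity of the drift and the Hölder
bound on `φ` force `x t ≤ C (T - t) ^ β` (let `t' ↑ T` in the integrated equation between `t` and
`t'`, `upper_bound`). By the lower bound on `f`, the drift is then at least
`K (T - s) ^ (-(α β))` near `T`, with `K = m C ^ (-α)` and `m > 0` a lower bound for `g`
near `T`. It suffices to integrate this over the first half `[t, (t + T) / 2]` of the remaining
interval: the integral is at least `K (T - t) ^ (1 - α β) / 2`, while the equation bounds it by
`2 C (T - t) ^ β`. Hence `K ≤ 4 C (T - t) ^ (β + α β - 1)`, and the exponent is positive because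
`α > 1 / β - 1`, so letting `t ↑ T` contradicts `K > 0`.
-/

/-- The integrated equation between two times, combined with a Hölder bound on the forcing `φ`;
`F` stands for the drift `s ↦ f s (x s)`. -/
lemma increment_le {β C T x₀ : ℝ} {φ x F : ℝ → ℝ} (hβ : 0 < β) (hC : 0 < C)
    (hφ : ∀ u ∈ Icc (0:ℝ) T, ∀ v ∈ Icc (0:ℝ) T, |φ u - φ v| ≤ C * |u - v| ^ β)
    (hF : ContinuousOn F (Ico 0 T))
    (heq : ∀ t ∈ Ico (0:ℝ) T, x t = x₀ + (∫ s in (0:ℝ)..t, F s) + φ t)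
    {t t' : ℝ} (ht : 0 ≤ t) (htt' : t ≤ t') (ht' : t' < T) :
    x t + (∫ s in t..t', F s) ≤ x t' + C * (T - t) ^ β := by
  have hint : ∀ a b : ℝ, 0 ≤ a → a ≤ b → b < T → IntervalIntegrable F volume a b := by
    intro a b ha hab hb
    apply ContinuousOn.intervalIntegrable
    rw [uIcc_of_le hab]
    exact hF.mono fun s hs => ⟨ha.trans hs.1, hs.2.trans_lt hb⟩
  have hadd := intervalIntegral.integral_add_adjacent_intervals
    (hint 0 t le_rfl ht (htt'.trans_lt ht')) (hint t t' ht htt' ht')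
  have h1 := heq t ⟨ht, htt'.trans_lt ht'⟩
  have h2 := heq t' ⟨ht.trans htt', ht'⟩
  have h3 := hφ t ⟨ht, (htt'.trans_lt ht').le⟩ t' ⟨ht.trans htt', ht'.le⟩
  have h4 : |t - t'| ^ β ≤ (T - t) ^ β := by
    apply Real.rpow_le_rpow (abs_nonneg _) _ hβ.le
    rw [abs_sub_comm, abs_of_nonneg (by linarith)]
    linarith
  have h5 := mul_le_mul_of_nonneg_left h4 hC.le
  have h6 := le_abs_self (φ t - φ t')
  linarith

/-- Letting `t' ↑ T` in `increment_le`: a solution with nonnegative drift that vanishes at `T`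
is `O((T - t) ^ β)`. -/
lemma upper_bound {β C T x₀ : ℝ} {φ x F : ℝ → ℝ} (hβ : 0 < β) (hC : 0 < C)
    (hφ : ∀ u ∈ Icc (0:ℝ) T, ∀ v ∈ Icc (0:ℝ) T, |φ u - φ v| ≤ C * |u - v| ^ β)
    (hF : ContinuousOn F (Ico 0 T)) (hF0 : ∀ s ∈ Ico (0:ℝ) T, 0 ≤ F s)
    (heq : ∀ t ∈ Ico (0:ℝ) T, x t = x₀ + (∫ s in (0:ℝ)..t, F s) + φ t)
    (hlim : Tendsto x (nhdsWithin T (Iio T)) (nhds 0))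
    {t : ℝ} (ht : 0 ≤ t) (htT : t < T) :
    x t ≤ C * (T - t) ^ β := by
  have hlim' : Tendsto (fun t' => x t' + C * (T - t) ^ β) (nhdsWithin T (Iio T))
      (nhds (0 + C * (T - t) ^ β)) := hlim.add tendsto_const_nhds
  rw [zero_add] at hlim'
  apply ge_of_tendsto hlim'
  filter_upwards [Ioo_mem_nhdsLT htT] with t' ht'
  have h := increment_le hβ hC hφ hF heq ht ht'.1.le ht'.2
  have h0 : 0 ≤ ∫ s in t..t', F s :=
    intervalIntegral.integral_nonneg ht'.1.le
      fun s hs => hF0 s ⟨ht.trans hs.1, hs.2.trans_lt ht'.2⟩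
  linarith

/-- Let `β ∈ (1/2,1)`, let `φ : [0,∞) → ℝ` satisfy `φ 0 = 0` and be
`β`-Hölder continuous on every compact interval, let `x₀ > 0`, and suppose `f` satisfies
assumptions (i) and (ii).  Then there is no finite `T > 0` and continuous positive function
`x : [0,T) → (0,∞)` satisfying `x t = x₀ + ∫₀ᵗ f(s, x s) ds + φ t` on `[0,T)` with
`x t → 0` as `t ↑ T`: under (i)–(ii) a positive local solution never reaches zero in
finite time. -/
theorem singular_ode_no_hitting_zero
    (β : ℝ) (hβ : β ∈ Set.Ioo (1/2 : ℝ) 1)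
    (φ : ℝ → ℝ) (hφ0 : φ 0 = 0)
    (hφH : ∀ T > (0:ℝ), ∃ C : ℝ, ∀ u ∈ Set.Icc (0:ℝ) T, ∀ v ∈ Set.Icc (0:ℝ) T,
      |φ u - φ v| ≤ C * |u - v| ^ β)
    (x₀ : ℝ) (hx₀ : 0 < x₀)
    (f f' : ℝ → ℝ → ℝ) (g : ℝ → ℝ) (x₁ α : ℝ)
    -- assumption (i)
    (hf_nonneg : ∀ t ≥ (0:ℝ), ∀ x > (0:ℝ), 0 ≤ f t x)
    (hf_cont : ContinuousOn (fun p : ℝ × ℝ => f p.1 p.2) (Set.Ici 0 ×ˢ Set.Ioi 0))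
    (hderiv : ∀ t ≥ (0:ℝ), ∀ x > (0:ℝ), HasDerivAt (fun y => f t y) (f' t x) x)
    (hf'_cont : ContinuousOn (fun p : ℝ × ℝ => f' p.1 p.2) (Set.Ici 0 ×ˢ Set.Ioi 0))
    (hf'_nonpos : ∀ t > (0:ℝ), ∀ x > (0:ℝ), f' t x ≤ 0)
    -- assumption (ii)
    (hx₁ : 0 < x₁) (hα : 1/β - 1 < α)
    (hg_nonneg : ∀ t ≥ (0:ℝ), 0 ≤ g t)
    (hg_cont : ContinuousOn g (Set.Ici 0))
    (hg_pos : ∀ t > (0:ℝ), 0 < g t)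
    (hlower : ∀ t ≥ (0:ℝ), ∀ x : ℝ, 0 < x → x < x₁ → g t * x ^ (-α) ≤ f t x) :
    ¬ ∃ T > (0:ℝ), ∃ x : ℝ → ℝ,
        ContinuousOn x (Set.Ico 0 T) ∧
        (∀ t ∈ Set.Ico (0:ℝ) T, 0 < x t) ∧
        (∀ t ∈ Set.Ico (0:ℝ) T, x t = x₀ + (∫ s in (0:ℝ)..t, f s (x s)) + φ t) ∧
        Tendsto x (nhdsWithin T (Set.Ico 0 T)) (nhds 0) := by
  rintro ⟨T, hT, x, hxc, hxpos, heq, hlim⟩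
  obtain ⟨hβ1, -⟩ := id hβ
  have hβ0 : 0 < β := by linarith
  have hα0 : 0 < α := by
    have : 1 < 1 / β := by rw [lt_div_iff₀ hβ0]; linarith [hβ.2]
    linarith
  have hexp : 0 < β + α * β - 1 := by
    have h := mul_lt_mul_of_pos_right hα hβ0
    rw [sub_mul, one_div, inv_mul_cancel₀ hβ0.ne'] at h
    linarith
  obtain ⟨C₀, hC₀⟩ := hφH T hT
  -- The given Hölder constant may be zero; a positive one is needed for `C ^ (-α)`.
  obtain ⟨C, hC, hφ⟩ : ∃ C > (0:ℝ), ∀ u ∈ Icc (0:ℝ) T, ∀ v ∈ Icc (0:ℝ) T,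
      |φ u - φ v| ≤ C * |u - v| ^ β := by
    refine ⟨max C₀ 1, lt_max_of_lt_right one_pos, fun u hu v hv => (hC₀ u hu v hv).trans ?_⟩
    exact mul_le_mul_of_nonneg_right (le_max_left _ _) (Real.rpow_nonneg (abs_nonneg _) _)
  have hF : ContinuousOn (fun s => f s (x s)) (Ico 0 T) :=
    hf_cont.comp (continuousOn_id.prodMk hxc) fun s hs => ⟨hs.1, hxpos s hs⟩
  have hF0 : ∀ s ∈ Ico (0:ℝ) T, 0 ≤ f s (x s) := fun s hs => hf_nonneg s hs.1 _ (hxpos s hs)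
  rw [nhdsWithin_Ico_eq_nhdsLT hT] at hlim
  have hub : ∀ t, 0 ≤ t → t < T → x t ≤ C * (T - t) ^ β := fun t h0 h1 =>
    upper_bound (F := fun s => f s (x s)) hβ0 hC hφ hF hF0 heq hlim h0 h1
  -- `g` may vanish at time `0`, so it is bounded below on `[T / 2, T]` only.
  obtain ⟨m, hm, hgm⟩ : ∃ m > (0:ℝ), ∀ s ∈ Icc (T / 2) T, m ≤ g s := by
    obtain ⟨s₀, hs₀, hmin⟩ := isCompact_Icc.exists_isMinOn
      (nonempty_Icc.2 (by linarith : T / 2 ≤ T))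
      (hg_cont.mono fun s (hs : s ∈ Icc (T / 2) T) => mem_Ici.2 (by linarith [hs.1]))
    exact ⟨g s₀, hg_pos s₀ (by linarith [hs₀.1]), fun s hs => hmin hs⟩
  set K : ℝ := m * C ^ (-α) with hK
  have hKpos : 0 < K := mul_pos hm (Real.rpow_pos_of_pos hC _)
  have hsmall : ∀ᶠ t in nhdsWithin T (Iio T), 4 * C * (T - t) ^ (β + α * β - 1) < K := by
    have hc : ContinuousAt (fun t : ℝ => 4 * C * (T - t) ^ (β + α * β - 1)) T :=
      continuousAt_const.mul
        ((continuousAt_const.sub continuousAt_id).rpow_const (Or.inr hexp.le))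
    have ht : Tendsto (fun t : ℝ => 4 * C * (T - t) ^ (β + α * β - 1))
        (nhdsWithin T (Iio T)) (nhds 0) := by
      have := hc.tendsto.mono_left (nhdsWithin_le_nhds (s := Iio T))
      simpa [Real.zero_rpow hexp.ne'] using this
    exact ht.eventually_lt_const hKpos
  obtain ⟨a, haT, ha⟩ := (mem_nhdsLT_iff_exists_Ioo_subset' hT).1 (hlim.eventually_lt_const hx₁)
  obtain ⟨t, hKt, hat, htT⟩ :=
    (hsmall.and (Ioo_mem_nhdsLT (max_lt (show a < T from haT)
      (by linarith : T / 2 < T)))).exists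
  have hta : a < t := (le_max_left _ _).trans_lt hat
  have htT2 : T / 2 < t := (le_max_right _ _).trans_lt hat
  have ht0 : 0 < t := by linarith
  have hr : 0 < T - t := by linarith
  have hlow : ∀ s ∈ Icc t ((t + T) / 2), K * (T - t) ^ (-(α * β)) ≤ f s (x s) := by
    intro s hs
    have hsT : s < T := by linarith [hs.2]
    have hs0 : 0 < s := ht0.trans_le hs.1
    have hxs := hxpos s ⟨hs0.le, hsT⟩
    have hxle : x s ≤ C * (T - t) ^ β := (hub s hs0.le hsT).trans
      (mul_le_mul_of_nonneg_left
        (Real.rpow_le_rpow (by linarith) (by linarith [hs.1]) hβ0.le) hC.le)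
    have hpow : C ^ (-α) * (T - t) ^ (-(α * β)) ≤ x s ^ (-α) := by
      have h := Real.rpow_le_rpow_of_nonpos hxs hxle (neg_nonpos.2 hα0.le)
      rw [Real.mul_rpow hC.le (Real.rpow_nonneg hr.le _), ← Real.rpow_mul hr.le] at h
      rwa [show -(α * β) = β * -α by ring]
    calc K * (T - t) ^ (-(α * β)) = m * (C ^ (-α) * (T - t) ^ (-(α * β))) := by
          rw [hK, mul_assoc]
      _ ≤ g s * x s ^ (-α) := mul_le_mul (hgm s ⟨htT2.le.trans hs.1, hsT.le⟩) hpow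
          (by positivity) (hg_nonneg s hs0.le)
      _ ≤ f s (x s) := hlower s hs0.le _ hxs (ha ⟨hta.trans_le hs.1, hsT⟩)
  have hmid : t ≤ (t + T) / 2 := by linarith
  have hmidT : (t + T) / 2 < T := by linarith
  have hintlow : (T - t) / 2 * (K * (T - t) ^ (-(α * β)))
      ≤ ∫ s in t..((t + T) / 2), f s (x s) := by
    have hint : IntervalIntegrable (fun s => f s (x s)) volume t ((t + T) / 2) := by
      apply ContinuousOn.intervalIntegrable
      rw [uIcc_of_le hmid]
      exact hF.mono fun s hs => ⟨ht0.le.trans hs.1, hs.2.trans_lt hmidT⟩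
    have h := intervalIntegral.integral_mono_on hmid
      (intervalIntegrable_const (c := K * (T - t) ^ (-(α * β)))) hint hlow
    rw [intervalIntegral.integral_const, smul_eq_mul] at h
    rwa [show (t + T) / 2 - t = (T - t) / 2 by ring] at h
  have hinc := increment_le (F := fun s => f s (x s)) hβ0 hC hφ hF heq ht0.le hmid hmidT
  have hxmid : x ((t + T) / 2) ≤ C * (T - t) ^ β :=
    (hub _ (by linarith) hmidT).trans (mul_le_mul_of_nonneg_left
      (Real.rpow_le_rpow (by linarith) (by linarith) hβ0.le) hC.le)
  have hxt := hxpos t ⟨ht0.le, htT⟩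
  -- Multiply the strict inequality for `K` by `(T - t) ^ (1 - α β)` and compare.
  have hp1 : (T - t) * (T - t) ^ (-(α * β)) = (T - t) ^ (1 - α * β) := by
    rw [sub_eq_add_neg 1, Real.rpow_add hr, Real.rpow_one]
  have hp2 : (T - t) ^ (β + α * β - 1) * (T - t) ^ (1 - α * β) = (T - t) ^ β := by
    rw [← Real.rpow_add hr]
    congr 1
    ring
  have hcontr := mul_lt_mul_of_pos_right hKt (Real.rpow_pos_of_pos hr (1 - α * β))
  rw [mul_assoc, hp2, ← hp1] at hcontr
  linarith
end

section
/- Let β ∈ (1/2,1), let φ : [0,∞) → ℝ satisfy φ(0) = 0 and be β-Hölder continuous on [0,T] for all T > 0, let x₀ > 0, and suppose f satisfies assumptions (i), (ii) and (iii). Let x be the unique positive continuous solution of x_t = x₀ + ∫₀ᵗ f(s, x_s) ds + φ(t). Then for every γ > 2 and every T > 0 there exist constants C₁ and C₂, depending only on β, γ, sup_{t∈[0,T]} h(t) and T, such that ‖x‖_{0,T,∞} ≤ C₁(|x₀| + 1) exp{ C₂ (1 + ‖φ‖_{0,T,β}^{γ/(β(γ−1))}) }. -/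
/-! The path can only grow while it is large, and there the drift is bounded. Given `t ∈ [0, T]`,
let `s` be the last time before `t` at which `x s ≤ x₀ + 1` (time `0` qualifies). On `(s, t]` the
solution exceeds `1`, so assumption (iii) bounds the drift by `2 M`, and subtracting the equation
at `s` from the equation at `t` gives the linear estimate
`x t ≤ x₀ + 1 + 2 M T + ‖φ‖_{0,T,β} T ^ β`.
Since `β < 1` and `γ > 2`, the exponent `p = γ / (β (γ - 1))` is at least `1`, so
`‖φ‖ ≤ 1 + ‖φ‖ ^ p ≤ exp (1 + ‖φ‖ ^ p)`, and the exponential bound follows with `C₂ = 1`. The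
estimate `abs_sub_le_holderNorm` supplies the Hölder increment and `last_exit_bound` the linear
estimate. -/

open Set MeasureTheory

/-- The supremum norm `‖x‖_{s,t,∞} = sup {|x r| : s ≤ r ≤ t}`. -/
noncomputable def supNorm (x : ℝ → ℝ) (s t : ℝ) : ℝ :=
  sSup ((fun r => |x r|) '' Set.Icc s t)

/-- The `β`-Hölder seminorm `‖x‖_{s,t,β} = sup {|x u − x v|/|u−v|^β : s ≤ u, v ≤ t, u ≠ v}`. -/
noncomputable def holderNorm (β : ℝ) (x : ℝ → ℝ) (s t : ℝ) : ℝ :=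
  sSup {c : ℝ | ∃ u ∈ Set.Icc s t, ∃ v ∈ Set.Icc s t, u ≠ v ∧ c = |x u - x v| / |u - v| ^ β}

lemma holderNorm_nonneg (β : ℝ) (φ : ℝ → ℝ) (s t : ℝ) : 0 ≤ holderNorm β φ s t := by
  apply Real.sSup_nonneg
  rintro c ⟨u, _, v, _, _, rfl⟩
  positivity

/-- The supremum defining the Hölder seminorm really is an upper bound once some Hölder constant
exists; otherwise `sSup` would take its default value `0`. -/
lemma abs_sub_le_holderNorm {β T C : ℝ} {φ : ℝ → ℝ}
    (hC : ∀ u ∈ Icc (0:ℝ) T, ∀ v ∈ Icc (0:ℝ) T, |φ u - φ v| ≤ C * |u - v| ^ β)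
    {u v : ℝ} (hu : u ∈ Icc (0:ℝ) T) (hv : v ∈ Icc (0:ℝ) T) :
    |φ u - φ v| ≤ holderNorm β φ 0 T * |u - v| ^ β := by
  rcases eq_or_ne u v with rfl | huv
  · simpa using mul_nonneg (holderNorm_nonneg β φ 0 T) (Real.rpow_nonneg le_rfl β)
  · have hpos : ∀ {a b : ℝ}, a ≠ b → 0 < |a - b| ^ β := fun hab =>
      Real.rpow_pos_of_pos (abs_pos.2 (sub_ne_zero.2 hab)) β
    rw [← div_le_iff₀ (hpos huv)]
    refine le_csSup ⟨C, ?_⟩ ⟨u, hu, v, hv, huv, rfl⟩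
    rintro c ⟨a, ha, b, hb, hab, rfl⟩
    exact (div_le_iff₀ (hpos hab)).2 (hC a ha b hb)

/-- A bound `K` on the drift wherever the path exceeds `x₀ + 1` bounds the path at time `t`: start
from the last time at which the path is at most `x₀ + 1`. -/
lemma last_exit_bound {x F φ : ℝ → ℝ} {x₀ K t D : ℝ} (ht : 0 ≤ t) (hK : 0 ≤ K)
    (hx : ContinuousOn x (Ici 0)) (hF : ContinuousOn F (Ici 0)) (hφ : φ 0 = 0)
    (hsol : ∀ t ≥ (0:ℝ), x t = x₀ + (∫ s in (0:ℝ)..t, F s) + φ t)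
    (hFK : ∀ r ∈ Icc 0 t, x₀ + 1 < x r → F r ≤ K)
    (hD : ∀ s ∈ Icc 0 t, φ t - φ s ≤ D) :
    x t ≤ x₀ + 1 + K * t + D := by
  have hint : ∀ a ≥ 0, ∀ b ≥ 0, IntervalIntegrable F volume a b := fun a ha b hb =>
    (hF.mono fun r hr => (le_min ha hb).trans hr.1).intervalIntegrable
  have hcomp : IsCompact (Icc 0 t ∩ x ⁻¹' Iic (x₀ + 1)) :=
    isCompact_Icc.of_isClosed_subset
      ((hx.mono fun r hr => hr.1).preimage_isClosed_of_isClosed isClosed_Icc isClosed_Iic)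
      inter_subset_left
  have hx0 : x 0 = x₀ := by simpa [hφ] using hsol 0 le_rfl
  have hne : (Icc 0 t ∩ x ⁻¹' Iic (x₀ + 1)).Nonempty := ⟨0, ⟨le_rfl, ht⟩, by simp [hx0]⟩
  obtain ⟨s, ⟨hs, hxs⟩, hmax⟩ := hcomp.exists_isGreatest hne
  have hxs : x s ≤ x₀ + 1 := hxs
  have hdrift : ∫ r in s..t, F r ≤ K * (t - s) := by
    calc ∫ r in s..t, F r ≤ ∫ _ in s..t, K := by
          refine intervalIntegral.integral_mono_on_of_le_Ioo hs.2 (hint s hs.1 t ht)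
            intervalIntegrable_const fun r hr => ?_
          have hr0 : r ∈ Icc 0 t := ⟨hs.1.trans hr.1.le, hr.2.le⟩
          refine hFK r hr0 (lt_of_not_ge fun hle => ?_)
          exact absurd (hmax ⟨hr0, hle⟩) (not_le.2 hr.1)
      _ = K * (t - s) := by simp [mul_comm]
  have hsplit := intervalIntegral.integral_add_adjacent_intervals
    (hint 0 le_rfl s hs.1) (hint s hs.1 t ht)
  have h1 := hsol t ht
  have h2 := hsol s hs.1
  have h3 := hD s hs
  nlinarith [mul_nonneg hK hs.1]

/-- **Theorem 2.2.**  Under assumptions (i)–(iii), if `x` is the positive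
solution of `x t = x₀ + ∫₀ᵗ f(s, x s) ds + φ t`, then for any `γ > 2` and `T > 0`,
`‖x‖_{0,T,∞} ≤ C₁ (|x₀|+1) exp{C₂ (1 + ‖φ‖_{0,T,β}^{γ/(β(γ−1))})}`, where the constants
`C₁, C₂` depend only on `β`, `γ`, `T` and an upper bound `M` for `h` on `[0,T]`
(they are chosen before the data `f, g, h, φ, x₀, x`). -/
theorem singular_ode_sup_estimate
    (β γ T M : ℝ) (hβ : β ∈ Set.Ioo (1/2 : ℝ) 1) (hγ : 2 < γ) (hT : 0 < T) :
    ∃ C₁ C₂ : ℝ, 0 < C₁ ∧ 0 < C₂ ∧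
      ∀ (f f' : ℝ → ℝ → ℝ) (g h : ℝ → ℝ) (x₁ α x₀ : ℝ) (φ x : ℝ → ℝ),
        -- assumption (i)
        (∀ t ≥ (0:ℝ), ∀ y > (0:ℝ), 0 ≤ f t y) →
        ContinuousOn (fun p : ℝ × ℝ => f p.1 p.2) (Set.Ici 0 ×ˢ Set.Ioi 0) →
        (∀ t ≥ (0:ℝ), ∀ y > (0:ℝ), HasDerivAt (fun z => f t z) (f' t y) y) →
        ContinuousOn (fun p : ℝ × ℝ => f' p.1 p.2) (Set.Ici 0 ×ˢ Set.Ioi 0) →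
        (∀ t > (0:ℝ), ∀ y > (0:ℝ), f' t y ≤ 0) →
        -- assumption (ii)
        0 < x₁ → 1/β - 1 < α →
        (∀ t ≥ (0:ℝ), 0 ≤ g t) → ContinuousOn g (Set.Ici 0) → (∀ t > (0:ℝ), 0 < g t) →
        (∀ t ≥ (0:ℝ), ∀ y : ℝ, 0 < y → y < x₁ → g t * y ^ (-α) ≤ f t y) →
        -- assumption (iii), with `h` bounded by `M` on `[0,T]`
        (∀ t ≥ (0:ℝ), 0 ≤ h t) →
        (∀ T' > (0:ℝ), ∃ M' : ℝ, ∀ t ∈ Set.Icc (0:ℝ) T', h t ≤ M') →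
        (∀ t ∈ Set.Icc (0:ℝ) T, h t ≤ M) →
        (∀ t ≥ (0:ℝ), ∀ y > (0:ℝ), f t y ≤ h t * (1 + 1/y)) →
        -- the driving path
        φ 0 = 0 →
        (∀ T' > (0:ℝ), ∃ C : ℝ, ∀ u ∈ Set.Icc (0:ℝ) T', ∀ v ∈ Set.Icc (0:ℝ) T',
          |φ u - φ v| ≤ C * |u - v| ^ β) →
        -- the solution
        0 < x₀ →
        ContinuousOn x (Set.Ici 0) →
        (∀ t ≥ (0:ℝ), 0 < x t) →
        (∀ t ≥ (0:ℝ), x t = x₀ + (∫ s in (0:ℝ)..t, f s (x s)) + φ t) →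
        supNorm x 0 T ≤
          C₁ * (|x₀| + 1) *
            Real.exp (C₂ * (1 + holderNorm β φ 0 T ^ (γ / (β * (γ - 1))))) := by
  obtain ⟨hβ0, hβ1⟩ := hβ
  have hTβ : 0 ≤ T ^ β := Real.rpow_nonneg hT.le β
  have hMT : 0 ≤ 2 * |M| * T := by positivity
  refine ⟨1 + 2 * |M| * T + T ^ β, 1, by linarith, one_pos, ?_⟩
  intro f f' g h x₁ α x₀ φ x _ hfc _ _ _ _ _ _ _ _ _ hh _ hhM hfh hφ0 hφ hx₀ hxc hxpos hsol
  have hH := holderNorm_nonneg β φ 0 T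
  set H := holderNorm β φ 0 T with hHdef
  set p := γ / (β * (γ - 1)) with hp
  have hp1 : 1 ≤ p := by
    rw [hp, one_le_div (mul_pos (by linarith) (by linarith))]
    nlinarith
  have hHp : H ≤ 1 + H ^ p := by
    have hHp0 : 0 ≤ H ^ p := Real.rpow_nonneg hH p
    rcases le_total H 1 with h1 | h1
    · linarith
    · linarith [Real.self_le_rpow_of_one_le h1 hp1]
  have hHE : H ≤ Real.exp (1 * (1 + H ^ p)) := by
    linarith [Real.add_one_le_exp (1 * (1 + H ^ p))]
  have hE1 : 1 ≤ Real.exp (1 * (1 + H ^ p)) := by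
    apply Real.one_le_exp
    linarith
  set E := Real.exp (1 * (1 + H ^ p))
  have hF : ContinuousOn (fun s => f s (x s)) (Ici 0) :=
    hfc.comp (continuousOn_id.prodMk hxc) fun s hs => ⟨hs, hxpos s hs⟩
  rw [abs_of_pos hx₀]
  have hlin : ∀ t ∈ Icc (0:ℝ) T, x t ≤ x₀ + 1 + 2 * |M| * T + H * T ^ β := by
    intro t ht
    have hbound : x t ≤ x₀ + 1 + 2 * |M| * t + H * T ^ β := by
      refine last_exit_bound ht.1 (by positivity) hxc hF hφ0 hsol ?_ ?_
      · intro r hr hxr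
        have hinv : 1 / x r ≤ 1 := (div_le_one (hxpos r hr.1)).2 (by linarith)
        have hhr : h r ≤ |M| := (hhM r ⟨hr.1, hr.2.trans ht.2⟩).trans (le_abs_self M)
        have := hfh r hr.1 (x r) (hxpos r hr.1)
        nlinarith [hh r hr.1]
      · intro s hs
        obtain ⟨C, hC⟩ := hφ T hT
        calc φ t - φ s ≤ |φ t - φ s| := le_abs_self _
          _ ≤ H * |t - s| ^ β := abs_sub_le_holderNorm hC ht ⟨hs.1, hs.2.trans ht.2⟩
          _ ≤ H * T ^ β := by
            gcongr
            rw [abs_of_nonneg (sub_nonneg.2 hs.2)]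
            linarith [hs.1, ht.2]
    have : 2 * |M| * t ≤ 2 * |M| * T := by
      have := ht.2
      gcongr
    linarith
  apply csSup_le ((nonempty_Icc.2 hT.le).image _)
  rintro _ ⟨t, ht, rfl⟩
  simp only [abs_of_pos (hxpos t ht.1)]
  calc x t ≤ x₀ + 1 + 2 * |M| * T + H * T ^ β := hlin t ht
    _ ≤ (x₀ + 1) * E + 2 * |M| * T * ((x₀ + 1) * E) + ((x₀ + 1) * E) * T ^ β := by
      have hxE : E ≤ (x₀ + 1) * E := le_mul_of_one_le_left (by linarith) (by linarith)
      have h1 : x₀ + 1 ≤ (x₀ + 1) * E := le_mul_of_one_le_right (by linarith) hE1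
      have h2 : 2 * |M| * T ≤ 2 * |M| * T * ((x₀ + 1) * E) :=
        le_mul_of_one_le_right hMT (by linarith)
      have h3 : H * T ^ β ≤ ((x₀ + 1) * E) * T ^ β := by
        gcongr
        linarith
      linarith
    _ = (1 + 2 * |M| * T + T ^ β) * (x₀ + 1) * E := by ring
end

section
/- Let 0 < α < 1 and β ∈ (0,1) with α + β > 1, let T > 0 and let φ : [0,T] → ℝ be β-Hölder continuous with Hölder seminorm ‖φ‖_{0,T,β}. Then for all 0 ≤ u < t ≤ T, | (φ(u) − φ(t))/(t−u)^{1−α} + (1−α) ∫ᵤᵗ (φ(u) − φ(r))/(r−u)^{2−α} dr | ≤ (1 + (1−α)/(α+β−1)) ‖φ‖_{0,T,β} (t−u)^{α+β−1}. -/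
/-!
Let `L` be the Hölder seminorm of `φ` on `[0,T]`, so that `|φ u - φ r| ≤ L (r-u)^β` there
(`abs_sub_le_holderNorm_mul`). The boundary term is then at most `L (t-u)^(α+β-1)`, and the
integrand is dominated by `L (r-u)^(α+β-2)`, which is integrable because `α+β > 1` and has
integral `L (t-u)^(α+β-1) / (α+β-1)`.
-/

open Set MeasureTheory

/-- The seminorm bounds increments: a set of reals without upper bound would have junk supremum `0`,
but Hölder continuity bounds the difference quotients above. -/
lemma abs_sub_le_holderNorm_mul {β T : ℝ} {φ : ℝ → ℝ}
    (hφH : ∃ C : ℝ, ∀ u ∈ Set.Icc (0:ℝ) T, ∀ v ∈ Set.Icc (0:ℝ) T,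
      |φ u - φ v| ≤ C * |u - v| ^ β)
    {u v : ℝ} (hu : u ∈ Set.Icc 0 T) (hv : v ∈ Set.Icc 0 T) (huv : u < v) :
    |φ u - φ v| ≤ holderNorm β φ 0 T * (v - u) ^ β := by
  obtain ⟨C, hC⟩ := hφH
  have hbdd : BddAbove {c : ℝ | ∃ u ∈ Set.Icc 0 T, ∃ v ∈ Set.Icc 0 T,
      u ≠ v ∧ c = |φ u - φ v| / |u - v| ^ β} := by
    refine ⟨C, ?_⟩
    rintro c ⟨x, hx, y, hy, hxy, rfl⟩
    have : 0 < |x - y| := abs_pos.mpr (sub_ne_zero.mpr hxy)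
    exact (div_le_iff₀ (Real.rpow_pos_of_pos this β)).mpr (hC x hx y hy)
  have h := le_csSup hbdd ⟨u, hu, v, hv, huv.ne, rfl⟩
  rw [abs_sub_comm u v, abs_of_pos (sub_pos.mpr huv),
    div_le_iff₀ (Real.rpow_pos_of_pos (sub_pos.mpr huv) β)] at h
  exact h

/-- Let `0 < α < 1` and `β ∈ (0,1)` with `α + β > 1`, `T > 0`, and let
`φ : [0,T] → ℝ` be `β`-Hölder continuous.  Then for all `0 ≤ u < t ≤ T`,
`|(φ u − φ t)/(t−u)^{1−α} + (1−α) ∫ᵤᵗ (φ u − φ r)/(r−u)^{2−α} dr|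
  ≤ (1 + (1−α)/(α+β−1)) ‖φ‖_{0,T,β} (t−u)^{α+β−1}`
(the bound (2.9) on the right-sided fractional derivative of `φ`). -/
theorem fractional_derivative_bound_right
    (α β T : ℝ) (hα0 : 0 < α) (hα1 : α < 1) (hβ : β ∈ Set.Ioo (0:ℝ) 1)
    (hαβ : 1 < α + β) (hT : 0 < T)
    (φ : ℝ → ℝ)
    (hφH : ∃ C : ℝ, ∀ u ∈ Set.Icc (0:ℝ) T, ∀ v ∈ Set.Icc (0:ℝ) T,
      |φ u - φ v| ≤ C * |u - v| ^ β) :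
    ∀ u t : ℝ, 0 ≤ u → u < t → t ≤ T →
      |(φ u - φ t) / (t - u) ^ (1 - α) +
          (1 - α) * ∫ r in u..t, (φ u - φ r) / (r - u) ^ (2 - α)| ≤
        (1 + (1 - α) / (α + β - 1)) * holderNorm β φ 0 T * (t - u) ^ (α + β - 1) := by
  intro u t hu hut htT
  set L := holderNorm β φ 0 T
  have hd : 0 < t - u := sub_pos.mpr hut
  have key : ∀ r ∈ Set.Ioc u t, ∀ γ : ℝ,
      |(φ u - φ r) / (r - u) ^ γ| ≤ L * (r - u) ^ (β - γ) := by
    intro r hr γ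
    have hr0 : 0 < r - u := sub_pos.mpr hr.1
    have h := abs_sub_le_holderNorm_mul hφH (u := u) (v := r) ⟨hu, by linarith⟩
      ⟨by linarith, hr.2.trans htT⟩ hr.1
    have hp := Real.rpow_pos_of_pos hr0 γ
    rw [abs_div, abs_of_pos hp, Real.rpow_sub hr0, ← mul_div_assoc]
    exact div_le_div_of_nonneg_right h hp.le
  have h1 : |(φ u - φ t) / (t - u) ^ (1 - α)| ≤ L * (t - u) ^ (α + β - 1) := by
    have h := key t ⟨hut, le_rfl⟩ (1 - α)
    rwa [show β - (1 - α) = α + β - 1 by ring] at h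
  have hint : IntervalIntegrable (fun r => L * (r - u) ^ (β - (2 - α))) volume u t := by
    have h := (intervalIntegral.intervalIntegrable_rpow' (a := 0) (b := t - u)
      (r := β - (2 - α)) (by linarith)).comp_sub_right u
    simp only [zero_add, sub_add_cancel] at h
    exact h.const_mul L
  have hval : ∫ r in u..t, L * (r - u) ^ (β - (2 - α)) =
      L * ((t - u) ^ (α + β - 1) / (α + β - 1)) := by
    rw [intervalIntegral.integral_const_mul,
      intervalIntegral.integral_comp_sub_right (fun x => x ^ (β - (2 - α))) u,
      integral_rpow (Or.inl (by linarith)), sub_self,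
      show β - (2 - α) + 1 = α + β - 1 by ring, Real.zero_rpow (by linarith), sub_zero]
  -- The domination bound needs no measurability of `φ`: for a non-integrable integrand the
  -- Bochner integral is zero.
  have h2 : |∫ r in u..t, (φ u - φ r) / (r - u) ^ (2 - α)| ≤
      L * ((t - u) ^ (α + β - 1) / (α + β - 1)) := by
    rw [← hval, ← Real.norm_eq_abs]
    exact intervalIntegral.norm_integral_le_of_norm_le hut.le
      (Filter.Eventually.of_forall fun r hr => key r hr (2 - α)) hint
  calc _ ≤ |(φ u - φ t) / (t - u) ^ (1 - α)| +
        |(1 - α) * ∫ r in u..t, (φ u - φ r) / (r - u) ^ (2 - α)| := abs_add_le _ _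
    _ ≤ L * (t - u) ^ (α + β - 1) +
        (1 - α) * (L * ((t - u) ^ (α + β - 1) / (α + β - 1))) := by
      rw [abs_mul, abs_of_pos (sub_pos.mpr hα1)]
      exact add_le_add h1 (mul_le_mul_of_nonneg_left h2 (by linarith))
    _ = _ := by ring
end
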